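/- Let N ≥ 1, let a, w ∈ ℂ^N both be conjugate centro-symmetric (i.e., lie in 𝕍), and assume a ≠ 0. Let w_∥ = ((a^H w)/‖a‖²)·a and w_⊥ = w − w_∥ be the orthogonal decomposition of w along a. Then w_∥ ∈ 𝕍 and w_⊥ ∈ 𝕍; more generally, for every real β, the updated weight w_⊥ + β·w_∥ belongs to 𝕍. -/

import Mathlib

/-!
Complex conjugation followed by reversal of the indices is an antiunitary involution whose fixed
vectors form the real subspace `𝕍`. Antiunitarity makes the inner product of two fixed vectors
equal to its own conjugate, so the projection coefficient `a^H w / ‖a‖²` is real, and everything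
in question is a real linear combination of `a` and `w`.
-/

open Complex BigOperators ComplexConjugate

/-- Hermitian inner product on `ℂ^N`, conjugate-linear in the first argument. -/
noncomputable def hip {N : ℕ} (x y : Fin N → ℂ) : ℂ := ∑ i, conj (x i) * y i

/-- Squared Euclidean norm on `ℂ^N`. -/
noncomputable def nsq {N : ℕ} (x : Fin N → ℂ) : ℝ := ∑ i, Complex.normSq (x i)

/-- A vector `v ∈ ℂ^N` is conjugate centro-symmetric if
`v i = conj (v (N+1−i))` for all positions `i = 1,…,N`. -/
def ccs {N : ℕ} (v : Fin N → ℂ) : Prop := ∀ i : Fin N, v i = conj (v i.rev)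

section

variable {N : ℕ} {v x y : Fin N → ℂ}

theorem ccs_iff_star_eq_comp_rev : ccs v ↔ star v = v ∘ Fin.rev :=
  (funext_iff (g := star (v ∘ Fin.rev))).symm.trans (eq_star_iff_eq_star.trans eq_comm)

theorem hip_comp_equiv (x y : Fin N → ℂ) (σ : Equiv.Perm (Fin N)) :
    hip (x ∘ σ) (y ∘ σ) = hip x y :=
  Equiv.sum_comp σ fun i => conj (x i) * y i

theorem conj_hip (x y : Fin N → ℂ) : conj (hip x y) = hip (star x) (star y) := by
  simp only [hip, map_sum, map_mul, Pi.star_apply, starRingEnd_apply]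

theorem conj_hip_of_ccs (hx : ccs x) (hy : ccs y) : conj (hip x y) = hip x y :=
  calc conj (hip x y) = hip (star x) (star y) := conj_hip x y
    _ = hip (x ∘ Fin.rev) (y ∘ Fin.rev) := by
      rw [ccs_iff_star_eq_comp_rev.mp hx, ccs_iff_star_eq_comp_rev.mp hy]
    _ = hip x y := hip_comp_equiv x y Fin.revPerm

/-- The set `𝕍` of conjugate centro-symmetric vectors, as a subspace of `ℂ^N` over `ℝ`
(it is not closed under multiplication by `i`). -/
def ccsSubmodule (N : ℕ) : Submodule ℝ (Fin N → ℂ) where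
  carrier := {v | ccs v}
  zero_mem' _ := (map_zero conj).symm
  add_mem' hu hv i := by
    rw [Pi.add_apply, Pi.add_apply, map_add, ← hu i, ← hv i]
  smul_mem' r v hv i := by
    rw [Pi.smul_apply, Pi.smul_apply, real_smul, real_smul, map_mul, conj_ofReal, ← hv i]

theorem mem_ccsSubmodule : v ∈ ccsSubmodule N ↔ ccs v := Iff.rfl

theorem hip_div_nsq_smul_mem_ccsSubmodule (hx : x ∈ ccsSubmodule N) (hy : y ∈ ccsSubmodule N) :
    (hip x y / (nsq x : ℂ)) • x ∈ ccsSubmodule N := by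
  obtain ⟨r, hr⟩ : ∃ r : ℝ, hip x y = r := conj_eq_iff_real.mp (conj_hip_of_ccs hx hy)
  rw [hr, ← ofReal_div, coe_smul]
  exact (ccsSubmodule N).smul_mem (r / nsq x) hx

end

/-- Closure property used in Appendix G of the paper: the orthogonal
decomposition of a conjugate centro-symmetric vector along a conjugate
centro-symmetric direction stays in `𝕍`, as does any real combination
`w⊥ + β·w∥`. -/
theorem stmt12 {N : ℕ} (hN : 1 ≤ N) (a w : Fin N → ℂ)
    (ha : ccs a) (hw : ccs w) (hane : a ≠ 0)
    (wpar wperp : Fin N → ℂ)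
    (hpar : wpar = ((hip a w) / (nsq a : ℂ)) • a)
    (hperp : wperp = w - wpar) :
    ccs wpar ∧ ccs wperp ∧ ∀ β : ℝ, ccs (wperp + (β : ℂ) • wpar) := by
  simp only [← mem_ccsSubmodule] at ha hw ⊢
  have wpar_mem : wpar ∈ ccsSubmodule N := hpar ▸ hip_div_nsq_smul_mem_ccsSubmodule ha hw
  have wperp_mem : wperp ∈ ccsSubmodule N := hperp ▸ sub_mem hw wpar_mem
  refine ⟨wpar_mem, wperp_mem, fun β => ?_⟩
  rw [coe_smul]
  exact add_mem wperp_mem ((ccsSubmodule N).smul_mem β wpar_mem)
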